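/- In the setting above (σ measurable and polynomially bounded, k ≥ 1, P ≥ k, Σ_n := Σ_{1-k/n}, R_{P,n} its degree-P Taylor remainder at 0, G = Σ_{i=1}^k w_i x_i + b with w_i, b i.i.d. N(0,1/n) and x uniform on {±1}^k, conditioning on the signs of the weights and bias): for any constant D > 0, the conditional expectation E[|R_{P,n}(G)|·1(|G| ≤ D)] = O(n^{-(P+1)/2}), uniformly over the conditioned signs. -/

import Mathlib

open MeasureTheory ProbabilityTheory Filter Finset Asymptotics
open scoped NNReal ENNReal

noncomputable section

/-- The ±1 value encoded by a Boolean bit. -/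
def bsign (b : Bool) : ℝ := if b then 1 else -1

/-- Expectation over a uniformly random point of the Boolean cube `{±1}^n`. -/
def bExp (n : ℕ) (g : (Fin n → Bool) → ℝ) : ℝ :=
  (∑ x : Fin n → Bool, g x) / 2 ^ n

/-- A function on the Boolean cube is Boolean(-valued) if it takes values in `{±1}`. -/
def IsBooleanFn {n : ℕ} (f : (Fin n → Bool) → ℝ) : Prop := ∀ x, f x = 1 ∨ f x = -1

/-- Initialization distribution: the weights `w : ℝⁿ` and the bias `b` are
iid `N(0, 1/n)` Gaussians. -/
def initMeasure (n : ℕ) : Measure ((Fin n → ℝ) × ℝ) :=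
  (Measure.pi fun _ : Fin n => gaussianReal 0 (n : ℝ≥0)⁻¹).prod (gaussianReal 0 (n : ℝ≥0)⁻¹)

/-- Initial alignment `INAL(f, σ) = E_{w,b} [ (E_x [f(x) σ(wᵀx + b)])² ]`. -/
def INAL (n : ℕ) (f : (Fin n → Bool) → ℝ) (σ : ℝ → ℝ) : ℝ :=
  ∫ θ : (Fin n → ℝ) × ℝ,
    (bExp n fun x => f x * σ (∑ i, θ.1 i * bsign (x i) + θ.2)) ^ 2 ∂ initMeasure n

/-- The `v`-Gaussian smoothing `Σ_v(t) = E_{Y ∼ N(0,v)} [σ(Y + t)]`. -/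
def gsmooth (σ : ℝ → ℝ) (v : ℝ) (t : ℝ) : ℝ :=
  ∫ y, σ (y + t) ∂ gaussianReal 0 v.toNNReal

/-- `σ` is polynomially bounded: `|σ(x)| ≤ C |x|^c + C` for some `C, c > 0`. -/
def PolyBounded (σ : ℝ → ℝ) : Prop :=
  ∃ C : ℝ, 0 < C ∧ ∃ c : ℕ, 0 < c ∧ ∀ x : ℝ, |σ x| ≤ C * |x| ^ c + C

/-- `σ` is expressive: measurable, polynomially bounded, and its Gaussian smoothing has no
two consecutive vanishing derivatives at `0`. -/
def Expressive (σ : ℝ → ℝ) : Prop :=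
  Measurable σ ∧ PolyBounded σ ∧
    ∀ m : ℕ, iteratedDeriv m (gsmooth σ 1) 0 ≠ 0 ∨ iteratedDeriv (m + 1) (gsmooth σ 1) 0 ≠ 0

/-- A nonnegative sequence is negligible if it decays faster than any inverse polynomial. -/
def Negligible (g : ℕ → ℝ) : Prop :=
  ∀ c : ℕ, Tendsto (fun n : ℕ => (n : ℝ) ^ c * g n) atTop (nhds 0)

/-- Fourier character `M_S(x) = ∏_{i ∈ S} x_i`. -/
def chi {n : ℕ} (S : Finset (Fin n)) (x : Fin n → Bool) : ℝ := ∏ i ∈ S, bsign (x i)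

/-- Fourier coefficient `f̂(S) = E_x [f(x) M_S(x)]`. -/
def fourierCoef (n : ℕ) (f : (Fin n → Bool) → ℝ) (S : Finset (Fin n)) : ℝ :=
  bExp n fun x => f x * chi S x

/-- Fourier weight up to degree `k`: `W^{≤k}(f)`. -/
def weightLE (n k : ℕ) (f : (Fin n → Bool) → ℝ) : ℝ :=
  ∑ S ∈ Finset.univ.filter (fun S : Finset (Fin n) => S.card ≤ k), fourierCoef n f S ^ 2

/-- Fourier weight strictly below degree `k`: `W^{<k}(f)`. -/
def weightLT (n k : ℕ) (f : (Fin n → Bool) → ℝ) : ℝ :=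
  ∑ S ∈ Finset.univ.filter (fun S : Finset (Fin n) => S.card < k), fourierCoef n f S ^ 2

/-- The monomial `M_k(x) = ∏_{i=1}^k x_i`, viewed as a function on `{±1}^n`. -/
def monomial (n k : ℕ) : (Fin n → Bool) → ℝ :=
  fun x => ∏ i ∈ Finset.univ.filter (fun i : Fin n => (i : ℕ) < k), bsign (x i)

/-- The `N`-extension of `f : {±1}^n → ℝ` (for `n ≤ N`): ignore the last `N - n` coordinates. -/
def extendFn (n N : ℕ) (f : (Fin n → Bool) → ℝ) : (Fin N → Bool) → ℝ :=
  fun x => f fun i => if h : (i : ℕ) < N then x ⟨i, h⟩ else false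

/-- Cross-predictability of (the uniform distribution on) the orbit of `f` under coordinate
permutations, with uniform inputs: `CP(orb(f), U^N)`. -/
def orbitCP (N : ℕ) (f : (Fin N → Bool) → ℝ) : ℝ :=
  (∑ π : Equiv.Perm (Fin N), ∑ π' : Equiv.Perm (Fin N),
      (bExp N fun x => f (fun i => x (π i)) * f (fun i => x (π' i))) ^ 2) /
    (Fintype.card (Equiv.Perm (Fin N))) ^ 2

/-- `N = n^{1+ε}` (rounded up). -/
def Ndim (ε : ℝ) (n : ℕ) : ℕ := ⌈(n : ℝ) ^ (1 + ε)⌉₊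

/-- The distribution of `(|w_1|, …, |w_k|, |b|)` is generated from `k + 1` iid `N(0, 1/n)`
variables (of which we take absolute values below). -/
def weightMeasure (n k : ℕ) : Measure ((Fin k → ℝ) × ℝ) :=
  (Measure.pi fun _ : Fin k => gaussianReal 0 (n : ℝ≥0)⁻¹).prod (gaussianReal 0 (n : ℝ≥0)⁻¹)

/-- `G = Σ_{i=1}^k τ_i |w_i| x_i + s |b|`, i.e. `Σ w_i x_i + b` conditioned
on `sign(w_i) = τ_i` and `sign(b) = s`. -/
def Gval (k : ℕ) (τ : Fin k → ℝ) (s : ℝ) (g : (Fin k → ℝ) × ℝ) (x : Fin k → Bool) : ℝ :=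
  ∑ i, τ i * |g.1 i| * bsign (x i) + s * |g.2|

/-- The conditional expectation `E[M_k(x) · F(G) | sign(w) = τ, sign(b) = s]`,
taken over `|w_1|, …, |w_k|, |b|` and uniform `x ∈ {±1}^k`. -/
def condExpFn (n k : ℕ) (τ : Fin k → ℝ) (s : ℝ) (F : ℝ → ℝ) : ℝ :=
  ∫ g : (Fin k → ℝ) × ℝ,
    (bExp k fun x => (∏ i, bsign (x i)) * F (Gval k τ s g x)) ∂ weightMeasure n k

/-- The conditional moment `E[M_k(x) · G^ν | sign(w) = τ, sign(b) = s]`. -/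
def condMoment (n k : ℕ) (τ : Fin k → ℝ) (s : ℝ) (ν : ℕ) : ℝ :=
  condExpFn n k τ s fun z => z ^ ν

/-- `s` is a sign. -/
def IsSign (s : ℝ) : Prop := s = 1 ∨ s = -1

/-- The degree-`P` Taylor remainder of the `v`-Gaussian smoothing `Σ_v` at `0`:
`R(z) = Σ_v(z) − Σ_{ν=0}^P Σ_v^{(ν)}(0)/ν! · z^ν`. -/
def taylorRem (σ : ℝ → ℝ) (v : ℝ) (P : ℕ) (z : ℝ) : ℝ :=
  gsmooth σ v z -
    ∑ ν ∈ Finset.range (P + 1),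
      iteratedDeriv ν (gsmooth σ v) 0 / (ν.factorial : ℝ) * z ^ ν

/-!
The smoothing `Σ_v` is the restriction to `ℝ` of an entire function, obtained by letting the mean
of the Gaussian density be complex. On a fixed disc this extension is bounded uniformly for `v` in
a compact subset of `(0, ∞)`, so Cauchy's estimates give `|R(z)| ≤ B |z| ^ (P + 1)` for `|z| ≤ D`
with `B` independent of `v`. Since `|G| ≤ ∑ |w_i| + |b|` and the absolute moments of order `P + 1`
of `N(0, 1/n)` scale like `n ^ (-(P + 1) / 2)`, integrating this bound gives the claim.
-/

section HolomorphicFunctions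

open Metric

variable {E : Type*} [NormedAddCommGroup E] [NormedSpace ℂ E]

/- Cauchy's estimate turns the bound on `F` into one on its derivative, so differentiation under
the integral needs no hypothesis on the derivative. -/
lemma differentiableAt_integral_of_dominated {α : Type*} [MeasurableSpace α] {μ : Measure α}
    {F : ℂ → α → E} {bound : α → ℝ} {z₀ : ℂ} {r : ℝ} (hr : 0 < r)
    (hF_meas : ∀ z, AEStronglyMeasurable (F z) μ)
    (hF_diff : ∀ᵐ x ∂μ, DifferentiableOn ℂ (F · x) (ball z₀ r))
    (hF_bound : ∀ᵐ x ∂μ, ∀ z ∈ ball z₀ r, ‖F z x‖ ≤ bound x) (hbound : Integrable bound μ) :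
    DifferentiableAt ℂ (fun z ↦ ∫ x, F z x ∂μ) z₀ := by
  have hr2 : 0 < r / 2 := half_pos hr
  have hsub : ∀ z ∈ ball z₀ (r / 2), closedBall z (r / 2) ⊆ ball z₀ r := fun z hz ↦
    closedBall_subset_ball' (by linarith [mem_ball.1 hz])
  have hderiv : ∀ᵐ x ∂μ, ∀ z ∈ ball z₀ (r / 2), HasDerivAt (F · x) (deriv (F · x) z) z := by
    filter_upwards [hF_diff] with x hx z hz
    have hz' : z ∈ ball z₀ r := ball_subset_ball (by linarith) hz
    exact (hx.differentiableAt (isOpen_ball.mem_nhds hz')).hasDerivAt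
  have hderiv_bound : ∀ᵐ x ∂μ, ∀ z ∈ ball z₀ (r / 2),
      ‖deriv (F · x) z‖ ≤ bound x / (r / 2) := by
    filter_upwards [hF_diff, hF_bound] with x hx hxb z hz
    refine Complex.norm_deriv_le_of_forall_mem_sphere_norm_le hr2
      (hx.diffContOnCl_ball (hsub z hz)) fun w hw ↦ ?_
    exact hxb w (hsub z hz (sphere_subset_closedBall hw))
  have hderiv_meas : AEStronglyMeasurable (fun x ↦ deriv (F · x) z₀) μ := by
    refine aestronglyMeasurable_of_tendsto_ae (nhdsWithin 0 {0}ᶜ)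
      (fun t ↦ ((hF_meas (z₀ + t)).sub (hF_meas z₀)).const_smul t⁻¹) ?_
    filter_upwards [hderiv] with x hx
    exact hasDerivAt_iff_tendsto_slope_zero.1 (hx z₀ (mem_ball_self hr2))
  have hF_int : Integrable (F z₀) μ := hbound.mono' (hF_meas z₀) <| by
    filter_upwards [hF_bound] with x hx using hx z₀ (mem_ball_self hr)
  exact (hasDerivAt_integral_of_dominated_loc_of_deriv_le (ball_mem_nhds z₀ hr2)
    (.of_forall hF_meas) hF_int hderiv_meas hderiv_bound (hbound.div_const _)
    hderiv).2.differentiableAt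

lemma norm_sub_sum_taylor_le [CompleteSpace E] {f : ℂ → E} {c z : ℂ} {R M : ℝ}
    (hf : DiffContOnCl ℂ f (ball c R)) (hM : ∀ w ∈ sphere c R, ‖f w‖ ≤ M) (hz : z ∈ ball c R)
    (N : ℕ) :
    ‖f z - ∑ n ∈ range N, (n.factorial : ℂ)⁻¹ • (z - c) ^ n • iteratedDeriv n f c‖ ≤
      M * (‖z - c‖ / R) ^ N * (1 - ‖z - c‖ / R)⁻¹ := by
  have hR : 0 < R := pos_of_mem_ball hz
  have hratio : ‖z - c‖ / R < 1 := (div_lt_one hR).2 (mem_ball_iff_norm.1 hz)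
  have hterm (n : ℕ) : ‖(n.factorial : ℂ)⁻¹ • (z - c) ^ n • iteratedDeriv n f c‖ ≤
      M * (‖z - c‖ / R) ^ n := by
    calc ‖(n.factorial : ℂ)⁻¹ • (z - c) ^ n • iteratedDeriv n f c‖
        = (n.factorial : ℝ)⁻¹ * (‖z - c‖ ^ n * ‖iteratedDeriv n f c‖) := by
          simp only [norm_smul, norm_inv, norm_pow, Complex.norm_natCast]
      _ ≤ (n.factorial : ℝ)⁻¹ * (‖z - c‖ ^ n * (n.factorial * M / R ^ n)) := by
          gcongr
          exact Complex.norm_iteratedDeriv_le_of_forall_mem_sphere_norm_le n hR hf hM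
      _ = M * (‖z - c‖ / R) ^ n := by
          have := n.factorial_ne_zero
          rw [div_pow]
          field_simp
  have htail := (hasSum_nat_add_iff' N).2
    (Complex.hasSum_taylorSeries_on_ball hf.differentiableOn hz)
  have hgeom := (hasSum_geometric_of_lt_one (by positivity) hratio).mul_left
    (M * (‖z - c‖ / R) ^ N)
  rw [← htail.tsum_eq]
  exact tsum_of_norm_bounded hgeom fun n ↦ (hterm (n + N)).trans_eq (by ring)

lemma iteratedDeriv_re_comp_ofReal {f : ℂ → ℂ} (hf : Differentiable ℂ f) (n : ℕ) :
    iteratedDeriv n (fun t : ℝ ↦ (f t).re) = fun t : ℝ ↦ (iteratedDeriv n f t).re := by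
  induction n with
  | zero => simp only [iteratedDeriv_zero]
  | succ n ih =>
    have hdiff : Differentiable ℂ (iteratedDeriv n f) :=
      hf.contDiff.differentiable_iteratedDeriv n (WithTop.coe_lt_top (n : ℕ∞))
    ext t
    rw [iteratedDeriv_succ, ih, iteratedDeriv_succ]
    exact (hdiff t).hasDerivAt.real_of_complex.deriv

end HolomorphicFunctions

section ComplexSmoothing

open Metric

/-- The density at `u` of a Gaussian of variance `v`, extended to a complex mean `z`. -/
def complexGaussianPDF (z : ℂ) (v : ℝ) (u : ℝ) : ℂ :=
  ((√(2 * Real.pi * v))⁻¹ : ℝ) * Complex.exp (-(u - z) ^ 2 / (2 * v))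

/-- The extension of the Gaussian smoothing `Σ_v` to complex arguments. The shift is put on the
density rather than on `σ`, which is defined on the real line only. -/
def complexGsmooth (σ : ℝ → ℝ) (v : ℝ) (z : ℂ) : ℂ :=
  ∫ u : ℝ, complexGaussianPDF z v u * σ u

lemma complexGaussianPDF_ofReal (t : ℝ) {v : ℝ} (hv : 0 ≤ v) (u : ℝ) :
    complexGaussianPDF t v u = gaussianPDFReal t v.toNNReal u := by
  simp only [complexGaussianPDF, gaussianPDFReal, Real.coe_toNNReal v hv]
  push_cast
  rfl

lemma continuous_complexGaussianPDF (z : ℂ) (v : ℝ) : Continuous (complexGaussianPDF z v) := by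
  unfold complexGaussianPDF
  fun_prop

lemma differentiable_complexGaussianPDF (v u : ℝ) :
    Differentiable ℂ (complexGaussianPDF · v u) := by
  unfold complexGaussianPDF
  fun_prop

lemma norm_complexGaussianPDF (z : ℂ) (v u : ℝ) :
    ‖complexGaussianPDF z v u‖ =
      (√(2 * Real.pi * v))⁻¹ * Real.exp ((z.im ^ 2 - (u - z.re) ^ 2) / (2 * v)) := by
  have hre : (-((u : ℂ) - z) ^ 2 / (2 * v)).re = (z.im ^ 2 - (u - z.re) ^ 2) / (2 * v) := by
    rw [show (2 * v : ℂ) = ((2 * v : ℝ) : ℂ) by push_cast; rfl, Complex.div_ofReal_re]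
    congr 1
    simp only [Complex.neg_re, pow_two, Complex.mul_re, Complex.sub_re, Complex.sub_im,
      Complex.ofReal_re, Complex.ofReal_im]
    ring
  rw [complexGaussianPDF, norm_mul, Complex.norm_exp, hre, Complex.norm_real,
    Real.norm_of_nonneg (by positivity)]

lemma neg_mul_sub_sq_le {p c : ℝ} (hp : 0 ≤ p) (hcp : c < p) (u x : ℝ) :
    -p * (u - x) ^ 2 ≤ p ^ 2 / (p - c) * x ^ 2 - c * u ^ 2 := by
  have hpc : 0 < p - c := sub_pos.2 hcp
  have hgap : p ^ 2 / (p - c) * x ^ 2 - c * u ^ 2 + p * (u - x) ^ 2 =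
      (p * x - (p - c) * u) ^ 2 / (p - c) + p * x ^ 2 := by
    field_simp
    ring
  have : 0 ≤ (p * x - (p - c) * u) ^ 2 / (p - c) + p * x ^ 2 := by positivity
  linarith

variable {σ : ℝ → ℝ} {a b c : ℝ}

lemma exists_norm_complexGaussianPDF_le (ha : 0 < a) (hc : c < 1 / (2 * b)) (R : ℝ) :
    ∃ K : ℝ, 0 < K ∧ ∀ v ∈ Set.Icc a b, ∀ z ∈ closedBall (0 : ℂ) R, ∀ u : ℝ,
      ‖complexGaussianPDF z v u‖ ≤ K * Real.exp (-c * u ^ 2) := by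
  set p := 1 / (2 * b) with hp
  refine ⟨(√(2 * Real.pi * a))⁻¹ * Real.exp ((p ^ 2 / (p - c) + 1 / (2 * a)) * R ^ 2),
    by positivity, fun v ⟨hav, hvb⟩ z hz u ↦ ?_⟩
  have hv : 0 < v := ha.trans_le hav
  have hb : 0 < b := hv.trans_le hvb
  have hp_nonneg : 0 ≤ p := by positivity
  have : 0 < p - c := sub_pos.2 hc
  have hz : ‖z‖ ≤ R := mem_closedBall_zero_iff.1 hz
  have hre : z.re ^ 2 ≤ R ^ 2 := sq_le_sq.2 <|
    (Complex.abs_re_le_norm z).trans (hz.trans (le_abs_self R))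
  have him : z.im ^ 2 ≤ R ^ 2 := sq_le_sq.2 <|
    (Complex.abs_im_le_norm z).trans (hz.trans (le_abs_self R))
  have hexponent : (z.im ^ 2 - (u - z.re) ^ 2) / (2 * v) ≤
      (p ^ 2 / (p - c) + 1 / (2 * a)) * R ^ 2 + -c * u ^ 2 := by
    calc (z.im ^ 2 - (u - z.re) ^ 2) / (2 * v)
        = 1 / (2 * v) * z.im ^ 2 - 1 / (2 * v) * (u - z.re) ^ 2 := by ring
      _ ≤ 1 / (2 * a) * z.im ^ 2 - p * (u - z.re) ^ 2 := by
          rw [hp]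
          gcongr
      _ ≤ 1 / (2 * a) * z.im ^ 2 + (p ^ 2 / (p - c) * z.re ^ 2 - c * u ^ 2) := by
          linarith [neg_mul_sub_sq_le hp_nonneg hc u z.re]
      _ ≤ 1 / (2 * a) * R ^ 2 + (p ^ 2 / (p - c) * R ^ 2 - c * u ^ 2) := by gcongr
      _ = (p ^ 2 / (p - c) + 1 / (2 * a)) * R ^ 2 + -c * u ^ 2 := by ring
  rw [norm_complexGaussianPDF, mul_assoc (√(2 * Real.pi * a))⁻¹, ← Real.exp_add]
  gcongr

lemma exists_norm_complexGaussianPDF_mul_le (σ : ℝ → ℝ) (ha : 0 < a) (hc : c < 1 / (2 * b))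
    (R : ℝ) :
    ∃ K : ℝ, 0 < K ∧ ∀ v ∈ Set.Icc a b, ∀ z ∈ closedBall (0 : ℂ) R, ∀ u : ℝ,
      ‖complexGaussianPDF z v u * σ u‖ ≤ K * ‖Real.exp (-c * u ^ 2) * σ u‖ := by
  obtain ⟨K, hK, hpdf⟩ := exists_norm_complexGaussianPDF_le ha hc R
  refine ⟨K, hK, fun v hv z hz u ↦ ?_⟩
  rw [norm_mul, Complex.norm_real, norm_mul, Real.norm_of_nonneg (Real.exp_pos _).le, ← mul_assoc]
  gcongr
  exact hpdf v hv z hz u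

lemma aestronglyMeasurable_complexGaussianPDF_mul
    (hσ : Integrable fun u : ℝ ↦ Real.exp (-c * u ^ 2) * σ u) (z : ℂ) (v : ℝ) :
    AEStronglyMeasurable (fun u : ℝ ↦ complexGaussianPDF z v u * σ u) := by
  have hσ_meas : AEStronglyMeasurable σ := by
    have hexp : Continuous fun u : ℝ ↦ Real.exp (c * u ^ 2) := by fun_prop
    refine (hexp.aestronglyMeasurable.mul hσ.1).congr (.of_forall fun u ↦ ?_)
    simp only [Pi.mul_apply, ← mul_assoc, ← Real.exp_add]
    simp
  exact (continuous_complexGaussianPDF z v).aestronglyMeasurable.mul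
    (Complex.continuous_ofReal.comp_aestronglyMeasurable hσ_meas)

lemma differentiable_complexGsmooth {v : ℝ} (hv : 0 < v) (hc : c < 1 / (2 * v))
    (hσ : Integrable fun u : ℝ ↦ Real.exp (-c * u ^ 2) * σ u) :
    Differentiable ℂ (complexGsmooth σ v) := by
  intro z₀
  obtain ⟨K, -, hK⟩ := exists_norm_complexGaussianPDF_mul_le σ hv hc (‖z₀‖ + 1)
  have hsub : ball z₀ 1 ⊆ closedBall 0 (‖z₀‖ + 1) :=
    ball_subset_closedBall.trans (closedBall_subset_closedBall' (by simp [add_comm]))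
  refine differentiableAt_integral_of_dominated one_pos
    (aestronglyMeasurable_complexGaussianPDF_mul hσ · v) (.of_forall fun u ↦ ?_)
    (.of_forall fun u z hz ↦ hK v ⟨le_rfl, le_rfl⟩ z (hsub hz) u) (hσ.norm.const_mul K)
  exact ((differentiable_complexGaussianPDF v u).mul_const _).differentiableOn

lemma exists_norm_complexGsmooth_le (ha : 0 < a) (hc : c < 1 / (2 * b))
    (hσ : Integrable fun u : ℝ ↦ Real.exp (-c * u ^ 2) * σ u) (R : ℝ) :
    ∃ M : ℝ, 0 ≤ M ∧ ∀ v ∈ Set.Icc a b, ∀ z ∈ closedBall (0 : ℂ) R,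
      ‖complexGsmooth σ v z‖ ≤ M := by
  obtain ⟨K, hK_pos, hK⟩ := exists_norm_complexGaussianPDF_mul_le σ ha hc R
  exact ⟨∫ u, K * ‖Real.exp (-c * u ^ 2) * σ u‖, integral_nonneg fun u ↦ by positivity,
    fun v hv z hz ↦ norm_integral_le_of_norm_le (hσ.norm.const_mul K) (.of_forall (hK v hv z hz))⟩

lemma complexGsmooth_ofReal (σ : ℝ → ℝ) {v : ℝ} (hv : 0 < v) (t : ℝ) :
    complexGsmooth σ v t = gsmooth σ v t := by
  have hv' : v.toNNReal ≠ 0 := (Real.toNNReal_pos.2 hv).ne'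
  have hgsmooth : gsmooth σ v t = ∫ u, gaussianPDFReal t v.toNNReal u * σ u := by
    rw [gsmooth, integral_gaussianReal_eq_integral_smul hv',
      ← integral_add_right_eq_self (fun u ↦ gaussianPDFReal t v.toNNReal u * σ u) t]
    simp [gaussianPDFReal]
  rw [hgsmooth, complexGsmooth, ← integral_complex_ofReal]
  simp only [complexGaussianPDF_ofReal t hv.le, Complex.ofReal_mul]

lemma taylorRem_eq_re {v : ℝ} (hv : 0 < v) (hdiff : Differentiable ℂ (complexGsmooth σ v))
    (P : ℕ) (z : ℝ) :
    taylorRem σ v P z = (complexGsmooth σ v z - ∑ n ∈ range (P + 1), (n.factorial : ℂ)⁻¹ •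
      ((z : ℂ) - 0) ^ n • iteratedDeriv n (complexGsmooth σ v) 0).re := by
  have hgsmooth : gsmooth σ v = fun t : ℝ ↦ (complexGsmooth σ v t).re := by
    ext t
    rw [complexGsmooth_ofReal σ hv, Complex.ofReal_re]
  rw [taylorRem, Complex.sub_re, Complex.re_sum, hgsmooth]
  congr 1
  refine sum_congr rfl fun n _ ↦ ?_
  have hreal : (n.factorial : ℂ)⁻¹ • ((z : ℂ) - 0) ^ n • iteratedDeriv n (complexGsmooth σ v) 0 =
      ((z ^ n / n.factorial : ℝ) : ℂ) * iteratedDeriv n (complexGsmooth σ v) 0 := by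
    simp only [smul_eq_mul, sub_zero]
    push_cast
    ring
  rw [iteratedDeriv_re_comp_ofReal hdiff, hreal, Complex.re_ofReal_mul]
  simp only [Complex.ofReal_zero]
  ring

lemma exists_abs_taylorRem_le (ha : 0 < a) (hc : c < 1 / (2 * b))
    (hσ : Integrable fun u : ℝ ↦ Real.exp (-c * u ^ 2) * σ u) (P : ℕ) (D : ℝ) :
    ∃ B : ℝ, 0 ≤ B ∧ ∀ v ∈ Set.Icc a b, ∀ z : ℝ, |z| ≤ D →
      |taylorRem σ v P z| ≤ B * |z| ^ (P + 1) := by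
  set R := 2 * (|D| + 1)
  have hR : 0 < R := by positivity
  obtain ⟨M, hM_nonneg, hM⟩ := exists_norm_complexGsmooth_le ha hc hσ R
  refine ⟨2 * M / R ^ (P + 1), by positivity, fun v hv z hz ↦ ?_⟩
  have hv_pos : 0 < v := ha.trans_le hv.1
  have hcv : c < 1 / (2 * v) := hc.trans_le (by gcongr; exact hv.2)
  have hdiff := differentiable_complexGsmooth hv_pos hcv hσ
  have hnorm : ‖(z : ℂ) - 0‖ = |z| := by rw [sub_zero, Complex.norm_real, Real.norm_eq_abs]
  have hratio : |z| / R ≤ 1 / 2 := by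
    rw [div_le_iff₀ hR]
    linarith [le_abs_self D]
  have hz_mem : (z : ℂ) ∈ ball 0 R := by
    rw [mem_ball_iff_norm, hnorm]
    linarith [(div_le_iff₀ hR).1 hratio]
  have htaylor := norm_sub_sum_taylor_le hdiff.diffContOnCl
    (fun w hw ↦ hM v hv w (sphere_subset_closedBall hw)) hz_mem (P + 1)
  rw [hnorm] at htaylor
  calc |taylorRem σ v P z|
      ≤ M * (|z| / R) ^ (P + 1) * (1 - |z| / R)⁻¹ := by
        rw [taylorRem_eq_re hv_pos hdiff]
        exact (Complex.abs_re_le_norm _).trans htaylor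
    _ ≤ M * (|z| / R) ^ (P + 1) * 2 := by
        gcongr
        exact inv_le_of_inv_le₀ two_pos (by linarith)
    _ = 2 * M / R ^ (P + 1) * |z| ^ (P + 1) := by
        rw [div_pow]
        ring

end ComplexSmoothing

lemma PolyBounded.integrable_exp_neg_mul_sq_mul {σ : ℝ → ℝ} (hpb : PolyBounded σ)
    (hmeas : Measurable σ) {c : ℝ} (hc : 0 < c) :
    Integrable fun u : ℝ ↦ Real.exp (-c * u ^ 2) * σ u := by
  obtain ⟨C, -, d, -, hbound⟩ := hpb
  have hpow : Integrable fun u : ℝ ↦ |u| ^ d * Real.exp (-c * u ^ 2) := by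
    have hd : (-1 : ℝ) < d := by linarith [d.cast_nonneg (α := ℝ)]
    refine (integrable_rpow_mul_exp_neg_mul_sq hc hd).norm.congr (.of_forall fun u ↦ ?_)
    simp [Real.rpow_natCast]
  refine ((hpow.const_mul C).add ((integrable_exp_neg_mul_sq hc).const_mul C)).mono'
    (by fun_prop) (.of_forall fun u ↦ ?_)
  calc ‖Real.exp (-c * u ^ 2) * σ u‖ = Real.exp (-c * u ^ 2) * |σ u| := by
        rw [norm_mul, Real.norm_of_nonneg (Real.exp_pos _).le, Real.norm_eq_abs]
    _ ≤ Real.exp (-c * u ^ 2) * (C * |u| ^ d + C) := by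
        gcongr
        exact hbound u
    _ = C * (|u| ^ d * Real.exp (-c * u ^ 2)) + C * Real.exp (-c * u ^ 2) := by ring

section GaussianMoments

lemma integrable_abs_pow_gaussianReal (μ : ℝ) (v : ℝ≥0) (m : ℕ) :
    Integrable (fun y ↦ |y| ^ m) (gaussianReal μ v) := by
  simpa using (memLp_id_gaussianReal (μ := μ) (v := v) m).integrable_norm_pow'

lemma integral_abs_pow_gaussianReal_zero (v : ℝ≥0) (m : ℕ) :
    ∫ y, |y| ^ m ∂gaussianReal 0 v = √v ^ m * ∫ y, |y| ^ m ∂gaussianReal 0 1 := by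
  have hscale : (gaussianReal 0 1).map (√v * ·) = gaussianReal 0 v := by
    rw [gaussianReal_map_const_mul, mul_zero]
    congr 1
    ext
    simp
  rw [← hscale, integral_map (by fun_prop) (by fun_prop), ← integral_const_mul]
  simp only [abs_mul, mul_pow, abs_of_nonneg (Real.sqrt_nonneg _)]

variable (n k : ℕ)

lemma measurePreserving_weight (i : Fin k) :
    MeasurePreserving (fun g : (Fin k → ℝ) × ℝ ↦ g.1 i) (weightMeasure n k)
      (gaussianReal 0 (n : ℝ≥0)⁻¹) :=
  (measurePreserving_eval (fun _ : Fin k ↦ gaussianReal 0 (n : ℝ≥0)⁻¹) i).comp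
    measurePreserving_fst

lemma measurePreserving_bias :
    MeasurePreserving (fun g : (Fin k → ℝ) × ℝ ↦ g.2) (weightMeasure n k)
      (gaussianReal 0 (n : ℝ≥0)⁻¹) :=
  measurePreserving_snd

lemma integrable_abs_weight_pow (m : ℕ) (i : Fin k) :
    Integrable (fun g : (Fin k → ℝ) × ℝ ↦ |g.1 i| ^ m) (weightMeasure n k) :=
  (measurePreserving_weight n k i).integrable_comp_of_integrable
    (integrable_abs_pow_gaussianReal _ _ m)

lemma integrable_abs_bias_pow (m : ℕ) :
    Integrable (fun g : (Fin k → ℝ) × ℝ ↦ |g.2| ^ m) (weightMeasure n k) :=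
  (measurePreserving_bias n k).integrable_comp_of_integrable
    (integrable_abs_pow_gaussianReal _ _ m)

lemma integrable_sum_abs_pow_weightMeasure (m : ℕ) :
    Integrable (fun g : (Fin k → ℝ) × ℝ ↦ ∑ i, |g.1 i| ^ m + |g.2| ^ m) (weightMeasure n k) :=
  (integrable_finsetSum _ fun i _ ↦ integrable_abs_weight_pow n k m i).add
    (integrable_abs_bias_pow n k m)

lemma integral_sum_abs_pow_weightMeasure (m : ℕ) :
    ∫ g : (Fin k → ℝ) × ℝ, (∑ i, |g.1 i| ^ m + |g.2| ^ m) ∂weightMeasure n k =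
      (k + 1) * ∫ y, |y| ^ m ∂gaussianReal 0 (n : ℝ≥0)⁻¹ := by
  have hcomp {X : (Fin k → ℝ) × ℝ → ℝ}
      (hX : MeasurePreserving X (weightMeasure n k) (gaussianReal 0 (n : ℝ≥0)⁻¹)) :
      ∫ g, |X g| ^ m ∂weightMeasure n k = ∫ y, |y| ^ m ∂gaussianReal 0 (n : ℝ≥0)⁻¹ := by
    rw [← hX.map_eq, integral_map hX.aemeasurable (by fun_prop)]
  rw [integral_add (integrable_finsetSum _ fun i _ ↦ integrable_abs_weight_pow n k m i)
      (integrable_abs_bias_pow n k m),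
    integral_finsetSum _ fun i _ ↦ integrable_abs_weight_pow n k m i,
    hcomp (measurePreserving_bias n k)]
  simp only [fun i ↦ hcomp (measurePreserving_weight n k i), sum_const, card_univ,
    Fintype.card_fin, nsmul_eq_mul]
  ring

end GaussianMoments

section TruncatedExpectation

lemma bExp_nonneg {k : ℕ} {f : (Fin k → Bool) → ℝ} (hf : ∀ x, 0 ≤ f x) : 0 ≤ bExp k f :=
  div_nonneg (sum_nonneg fun x _ ↦ hf x) (by positivity)

lemma bExp_le_of_forall_le {k : ℕ} {f : (Fin k → Bool) → ℝ} {C : ℝ} (hf : ∀ x, f x ≤ C) :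
    bExp k f ≤ C := by
  rw [bExp, div_le_iff₀ (by positivity)]
  calc ∑ x, f x ≤ ∑ _ : Fin k → Bool, C := sum_le_sum fun x _ ↦ hf x
    _ = C * 2 ^ k := by simp [mul_comm]

lemma abs_bsign (b : Bool) : |bsign b| = 1 := by
  cases b <;> simp [bsign]

lemma IsSign.abs_eq_one {s : ℝ} (hs : IsSign s) : |s| = 1 := by
  rcases hs with rfl | rfl <;> simp

lemma abs_Gval_le {k : ℕ} {τ : Fin k → ℝ} (hτ : ∀ i, IsSign (τ i)) {s : ℝ} (hs : IsSign s)
    (g : (Fin k → ℝ) × ℝ) (x : Fin k → Bool) :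
    |Gval k τ s g x| ≤ ∑ i, |g.1 i| + |g.2| := by
  calc |Gval k τ s g x|
      ≤ ∑ i, |τ i * |g.1 i| * bsign (x i)| + |(s * |g.2|)| :=
        (abs_add_le _ _).trans (by gcongr; exact abs_sum_le_sum_abs _ _)
    _ = ∑ i, |g.1 i| + |g.2| := by
        simp only [abs_mul, abs_abs, (hτ _).abs_eq_one, hs.abs_eq_one, abs_bsign, one_mul, mul_one]

lemma sum_add_pow_succ_le {ι : Type*} [Fintype ι] {w : ι → ℝ} (hw : ∀ i, 0 ≤ w i) {b : ℝ}
    (hb : 0 ≤ b) (p : ℕ) :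
    (∑ i, w i + b) ^ (p + 1) ≤
      (Fintype.card ι + 1 : ℝ) ^ p * (∑ i, w i ^ (p + 1) + b ^ (p + 1)) := by
  have hjensen := pow_sum_div_card_le_sum_pow (s := (univ : Finset (Option ι)))
    (f := fun o ↦ o.elim b w) (by rintro (_ | i) _ <;> simp [hb, hw]) p
  rw [card_univ, Fintype.card_option, Nat.cast_succ, div_le_iff₀' (by positivity)] at hjensen
  simpa only [Fintype.sum_option, Option.elim_none, Option.elim_some, add_comm b,
    add_comm (b ^ (p + 1))] using hjensen

lemma abs_Gval_pow_succ_le {k : ℕ} {τ : Fin k → ℝ} (hτ : ∀ i, IsSign (τ i)) {s : ℝ}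
    (hs : IsSign s) (g : (Fin k → ℝ) × ℝ) (x : Fin k → Bool) (p : ℕ) :
    |Gval k τ s g x| ^ (p + 1) ≤
      (k + 1 : ℝ) ^ p * (∑ i, |g.1 i| ^ (p + 1) + |g.2| ^ (p + 1)) := by
  calc |Gval k τ s g x| ^ (p + 1) ≤ (∑ i, |g.1 i| + |g.2|) ^ (p + 1) := by
        gcongr
        exact abs_Gval_le hτ hs g x
    _ ≤ _ := by
        simpa only [Fintype.card_fin] using
          sum_add_pow_succ_le (fun i ↦ abs_nonneg (g.1 i)) (abs_nonneg g.2) p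

lemma integral_bExp_truncated_le {F : ℝ → ℝ} {B D : ℝ} {p : ℕ} (hB : 0 ≤ B)
    (hF : ∀ z, |z| ≤ D → |F z| ≤ B * |z| ^ (p + 1)) (n : ℕ) {k : ℕ} {τ : Fin k → ℝ}
    (hτ : ∀ i, IsSign (τ i)) {s : ℝ} (hs : IsSign s) :
    ∫ g, (bExp k fun x ↦ |F (Gval k τ s g x)| *
        (if |Gval k τ s g x| ≤ D then (1 : ℝ) else 0)) ∂weightMeasure n k ≤
      B * (k + 1) ^ (p + 1) * ∫ y, |y| ^ (p + 1) ∂gaussianReal 0 (n : ℝ≥0)⁻¹ := by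
  have hpointwise (g : (Fin k → ℝ) × ℝ) (x : Fin k → Bool) :
      |F (Gval k τ s g x)| * (if |Gval k τ s g x| ≤ D then (1 : ℝ) else 0) ≤
        B * (k + 1) ^ p * (∑ i, |g.1 i| ^ (p + 1) + |g.2| ^ (p + 1)) := by
    split_ifs with hG
    · rw [mul_one, mul_assoc]
      exact (hF _ hG).trans (by gcongr; exact abs_Gval_pow_succ_le hτ hs g x p)
    · rw [mul_zero]
      positivity
  calc _ ≤ ∫ g : (Fin k → ℝ) × ℝ,
        B * (k + 1) ^ p * (∑ i, |g.1 i| ^ (p + 1) + |g.2| ^ (p + 1)) ∂weightMeasure n k := by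
        refine integral_mono_of_nonneg (.of_forall fun g ↦ bExp_nonneg fun x ↦ by positivity)
          ((integrable_sum_abs_pow_weightMeasure n k (p + 1)).const_mul _)
          (.of_forall fun g ↦ bExp_le_of_forall_le (hpointwise g))
    _ = _ := by
        rw [integral_const_mul, integral_sum_abs_pow_weightMeasure]
        ring

end TruncatedExpectation

lemma sqrt_inv_pow_eq_rpow {x : ℝ} (hx : 0 ≤ x) (m : ℕ) : √x⁻¹ ^ m = x ^ (-(m : ℝ) / 2) := by
  rw [Real.sqrt_eq_rpow, ← Real.rpow_neg_one, ← Real.rpow_mul hx, ← Real.rpow_mul_natCast hx]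
  congr 1
  ring

lemma one_sub_div_mem_Icc {k n : ℕ} (hn : 0 < n) (hkn : 2 * k ≤ n) :
    1 - (k : ℝ) / n ∈ Set.Icc (1 / 2 : ℝ) 1 := by
  have hn' : (0 : ℝ) < n := by exact_mod_cast hn
  have hkn' : 2 * (k : ℝ) ≤ n := by exact_mod_cast hkn
  have hle : (k : ℝ) / n ≤ 1 / 2 := by
    rw [div_le_iff₀ hn']
    linarith
  exact ⟨by linarith, sub_le_self 1 (by positivity)⟩

theorem remainder_bounded_region_general {σ : ℝ → ℝ} {c : ℝ} (hc : c < 1 / 2)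
    (hσ : Integrable fun u : ℝ ↦ Real.exp (-c * u ^ 2) * σ u) (k P : ℕ) (D : ℝ) :
    ∃ C₀ : ℝ, 0 < C₀ ∧ ∀ n : ℕ, 1 ≤ n → 2 * k ≤ n →
      ∀ τ : Fin k → ℝ, (∀ i, IsSign (τ i)) → ∀ s : ℝ, IsSign s →
        (∫ g : (Fin k → ℝ) × ℝ,
            (bExp k fun x =>
              |taylorRem σ (1 - (k : ℝ) / n) P (Gval k τ s g x)| *
                (if |Gval k τ s g x| ≤ D then (1 : ℝ) else 0)) ∂ weightMeasure n k) ≤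
          C₀ * (n : ℝ) ^ (-((P : ℝ) + 1) / 2) := by
  obtain ⟨B, hB, hrem⟩ := exists_abs_taylorRem_le (a := 1 / 2) (b := 1) (by norm_num)
    (by simpa using hc) hσ P D
  set m₁ := ∫ y, |y| ^ (P + 1) ∂gaussianReal 0 1
  have : 0 ≤ m₁ := integral_nonneg fun y ↦ by positivity
  refine ⟨B * (k + 1) ^ (P + 1) * m₁ + 1, by positivity, fun n hn hkn τ hτ s hs ↦ ?_⟩
  have hmoment : ∫ y, |y| ^ (P + 1) ∂gaussianReal 0 (n : ℝ≥0)⁻¹ =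
      (n : ℝ) ^ (-((P : ℝ) + 1) / 2) * m₁ := by
    rw [integral_abs_pow_gaussianReal_zero, NNReal.coe_inv, NNReal.coe_natCast,
      sqrt_inv_pow_eq_rpow n.cast_nonneg, Nat.cast_succ]
  refine (integral_bExp_truncated_le hB (hrem _ (one_sub_div_mem_Icc hn hkn)) n hτ hs).trans ?_
  rw [hmoment, mul_left_comm, mul_comm]
  gcongr
  exact le_add_of_nonneg_right zero_le_one

/-- Bounded-region part of the remainder: for any constant `D > 0`,
conditionally on any fixed signs,
`E[|R_{P,n}(G)| · 1(|G| ≤ D)] = O(n^{-(P+1)/2})`, uniformly over the signs. -/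
theorem remainder_bounded_region
    (σ : ℝ → ℝ) (hmeas : Measurable σ) (hpb : PolyBounded σ)
    (k P : ℕ) (hk : 1 ≤ k) (hkP : k ≤ P) (D : ℝ) (hD : 0 < D) :
    ∃ C₀ : ℝ, 0 < C₀ ∧ ∃ n₀ : ℕ, ∀ n : ℕ, n₀ ≤ n → 2 * k ≤ n →
      ∀ τ : Fin k → ℝ, (∀ i, IsSign (τ i)) → ∀ s : ℝ, IsSign s →
        (∫ g : (Fin k → ℝ) × ℝ,
            (bExp k fun x =>
              |taylorRem σ (1 - (k : ℝ) / n) P (Gval k τ s g x)| *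
                (if |Gval k τ s g x| ≤ D then (1 : ℝ) else 0)) ∂ weightMeasure n k) ≤
          C₀ * (n : ℝ) ^ (-((P : ℝ) + 1) / 2) := by
  obtain ⟨C₀, hC₀, hbound⟩ := remainder_bounded_region_general (c := 1 / 4) (by norm_num)
    (hpb.integrable_exp_neg_mul_sq_mul hmeas (by norm_num)) k P D
  exact ⟨C₀, hC₀, 1, hbound⟩
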